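/- Let L be a line in P^2, let p_2, p_3, p_4, p_5 be four distinct points of L, and let p_1 be a point not on L. Let Z = 2p_1 + p_2 + p_3 + p_4 + p_5 be the fat points scheme with a double point at p_1 and simple points at p_2,…,p_5. Then the Waldschmidt constant of I(Z) equals 5/2. -/

import Mathlib

noncomputable section

open MvPolynomial

/-- `alpha J` is the least degree of a nonzero homogeneous form in the ideal `J`. -/
def alpha {kk : Type*} [Field kk] {σ : Type*} (J : Ideal (MvPolynomial σ kk)) : ℕ :=
  sInf {d : ℕ | ∃ f ∈ J, f ≠ 0 ∧ MvPolynomial.IsHomogeneous f d}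

/-- The homogeneous (prime) ideal of the point of `ℙ²` represented by the nonzero vector
`p`, generated by the linear forms vanishing at `p`. -/
def pointIdeal {kk : Type*} [Field kk] (p : Fin 3 → kk) : Ideal (MvPolynomial (Fin 3) kk) :=
  Ideal.span {f | f.IsHomogeneous 1 ∧ MvPolynomial.eval p f = 0}

/-- Two nonzero vectors represent the same point of `ℙ²`. -/
def projEq {kk : Type*} [Field kk] (p q : Fin 3 → kk) : Prop :=
  ∃ c : kk, c ≠ 0 ∧ q = c • p

/-!
Let `q` be a point off the line `ℓ = 0` and let `p i` be `n` points on it. Every polynomial has an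
expansion `F = ∑ j, G j * ℓ ^ j` in which the `G j` are polynomials in the linear forms
vanishing at `q`, and vanishing conditions on `F` can be read off from each `G j` separately:
if `F` has multiplicity `M` at `q`, then so does `G j`, and if `F` has multiplicity `k` at `p i`,
then the line joining `q` to `p i` divides `G j` at least `k - j` times. For a form `F` of degree
`d` with `M = m * k`, a single nonzero `G j`, which has degree `d - j`, therefore gives
`m * k ≤ d - j` and `n * (k - j) ≤ d - j`, whence `d / k ≥ m + 1 - m / n`. Equality holds for
`ℓ ^ (n - m)` times the `m`-th powers of the `n` joining lines, with `k = n`.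
-/

section LinearForms

variable {K : Type*} [Field K]

/-- The linear form `∑ i, c i * X i` with coefficient vector `c`. -/
def linearForm {σ : Type*} [Fintype σ] (c : σ → K) : MvPolynomial σ K :=
  ∑ i, C (c i) * X i

variable {σ : Type*} [Fintype σ]

lemma isHomogeneous_linearForm (c : σ → K) : (linearForm c).IsHomogeneous 1 :=
  IsHomogeneous.sum _ _ _ fun _ _ => isHomogeneous_C_mul_X _ _

lemma eval_linearForm (c v : σ → K) : eval v (linearForm c) = c ⬝ᵥ v := by
  simp [linearForm, dotProduct]

lemma linearForm_smul (a : K) (c : σ → K) : linearForm (a • c) = C a * linearForm c := by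
  simp [linearForm, Finset.mul_sum, mul_assoc]

lemma linearForm_ne_zero {c : σ → K} (hc : c ≠ 0) : linearForm c ≠ 0 := by
  classical
  contrapose! hc
  funext i
  simpa [eval_linearForm] using congrArg (eval (Pi.single i 1)) hc

lemma exists_eq_linearForm {f : MvPolynomial σ K} (hf : f.IsHomogeneous 1) :
    ∃ c : σ → K, f = linearForm c := by
  have hspan : f ∈ Submodule.span K (Set.range X) :=
    homogeneousSubmodule_one_eq_span_X (σ := σ) (R := K) ▸ hf
  obtain ⟨c, rfl⟩ := (Submodule.mem_span_range_iff_exists_fun K).mp hspan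
  exact ⟨c, by simp [linearForm, smul_eq_C_mul]⟩

lemma irreducible_of_isHomogeneous_one {τ : Type*} {f : MvPolynomial τ K}
    (hf : f.IsHomogeneous 1) (hf0 : f ≠ 0) : Irreducible f := by
  obtain ⟨s, hs⟩ := ne_zero_iff.mp hf0
  refine irreducible_of_totalDegree_eq_one (hf.totalDegree hf0) fun x hx => ?_
  exact (ne_zero_of_dvd_ne_zero hs (hx s)).isUnit

end LinearForms

section JoiningLines

open Matrix

variable {K : Type*} [Field K] {p q : Fin 3 → K} {f ℓ : MvPolynomial (Fin 3) K}

lemma projEq_symm (h : projEq p q) : projEq q p := by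
  obtain ⟨c, hc, rfl⟩ := h
  exact ⟨c⁻¹, inv_ne_zero hc, by rw [smul_smul, inv_mul_cancel₀ hc, one_smul]⟩

lemma cross_ne_zero_of_not_projEq (hp : p ≠ 0) (hq : q ≠ 0) (hpq : ¬ projEq p q) :
    p ⨯₃ q ≠ 0 := by
  rw [crossProduct_ne_zero_iff_linearIndependent, LinearIndependent.pair_iff' hp]
  rintro a rfl
  exact hpq ⟨a, left_ne_zero_of_smul hq, rfl⟩

lemma exists_eq_smul_cross_of_dotProduct_eq_zero {c : Fin 3 → K} (hpq : p ⨯₃ q ≠ 0)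
    (hp : c ⬝ᵥ p = 0) (hq : c ⬝ᵥ q = 0) : ∃ a : K, c = a • (p ⨯₃ q) := by
  have hparallel : (p ⨯₃ q) ⨯₃ c = 0 := by
    rw [cross_cross_eq_smul_sub_smul, dotProduct_comm p, dotProduct_comm q, hp, hq,
      zero_smul, zero_smul, sub_zero]
  by_contra! hne
  refine crossProduct_ne_zero_iff_linearIndependent.mpr ?_ hparallel
  exact (LinearIndependent.pair_iff' hpq).mpr fun a => (hne a).symm

/-- The equation of the line joining `p` to `q`; it is zero when the two points coincide. -/
def joiningLine (p q : Fin 3 → K) : MvPolynomial (Fin 3) K :=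
  linearForm (p ⨯₃ q)

lemma isHomogeneous_joiningLine (p q : Fin 3 → K) : (joiningLine p q).IsHomogeneous 1 :=
  isHomogeneous_linearForm _

lemma eval_left_joiningLine (p q : Fin 3 → K) : eval p (joiningLine p q) = 0 := by
  rw [joiningLine, eval_linearForm, dotProduct_comm, dot_self_cross]

lemma eval_right_joiningLine (p q : Fin 3 → K) : eval q (joiningLine p q) = 0 := by
  rw [joiningLine, eval_linearForm, dotProduct_comm, dot_cross_self]

lemma eval_joiningLine_rotate (p q r : Fin 3 → K) :
    eval r (joiningLine p q) = eval p (joiningLine q r) := by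
  simp only [joiningLine, eval_linearForm, dotProduct_comm _ r, dotProduct_comm _ p,
    triple_product_permutation r]

lemma joiningLine_dvd (hpq : p ⨯₃ q ≠ 0) (hf : f.IsHomogeneous 1) (hfp : eval p f = 0)
    (hfq : eval q f = 0) : joiningLine p q ∣ f := by
  obtain ⟨c, rfl⟩ := exists_eq_linearForm hf
  rw [eval_linearForm] at hfp hfq
  obtain ⟨a, rfl⟩ := exists_eq_smul_cross_of_dotProduct_eq_zero hpq hfp hfq
  exact ⟨C a, by rw [linearForm_smul, joiningLine, mul_comm]⟩

lemma cross_ne_zero_of_off_line (hℓ : ℓ.IsHomogeneous 1) (hq : eval q ℓ ≠ 0) (hp : p ≠ 0)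
    (hpℓ : eval p ℓ = 0) : q ⨯₃ p ≠ 0 := by
  obtain ⟨c, rfl⟩ := exists_eq_linearForm hℓ
  rw [eval_linearForm] at hq hpℓ
  have hq0 : q ≠ 0 := by rintro rfl; simp at hq
  refine cross_ne_zero_of_not_projEq hq0 hp ?_
  rintro ⟨a, ha, rfl⟩
  simp [ha, hq] at hpℓ

lemma joiningLine_ne_zero_of_off_line (hℓ : ℓ.IsHomogeneous 1) (hq : eval q ℓ ≠ 0) (hp : p ≠ 0)
    (hpℓ : eval p ℓ = 0) : joiningLine q p ≠ 0 :=
  linearForm_ne_zero (cross_ne_zero_of_off_line hℓ hq hp hpℓ)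

variable {ι : Type*} {r : ι → Fin 3 → K}

lemma pairwise_isRelPrime_joiningLine (hℓ : ℓ.IsHomogeneous 1) (hq : eval q ℓ ≠ 0)
    (hr : ∀ i, r i ≠ 0) (hrℓ : ∀ i, eval (r i) ℓ = 0)
    (hrr : Pairwise fun i j => ¬ projEq (r i) (r j)) :
    Pairwise fun i j => IsRelPrime (joiningLine q (r i)) (joiningLine q (r j)) := by
  intro i j hij
  have hirr : Irreducible (joiningLine q (r i)) :=
    irreducible_of_isHomogeneous_one (isHomogeneous_joiningLine _ _)
      (joiningLine_ne_zero_of_off_line hℓ hq (hr i) (hrℓ i))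
  have hjoin_dvd : joiningLine (r j) (r i) ∣ ℓ :=
    joiningLine_dvd (cross_ne_zero_of_not_projEq (hr j) (hr i) (hrr hij.symm)) hℓ (hrℓ j) (hrℓ i)
  have hnoncollinear : eval (r i) (joiningLine q (r j)) ≠ 0 := by
    rw [eval_joiningLine_rotate]
    exact ne_zero_of_dvd_ne_zero hq (map_dvd _ hjoin_dvd)
  refine hirr.isRelPrime_iff_not_dvd.mpr fun hdvd => hnoncollinear ?_
  exact zero_dvd_iff.mp (eval_right_joiningLine q (r i) ▸ map_dvd (eval (r i)) hdvd)

end JoiningLines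

section ConeExpansion

lemma coeff_mem_pow_sub_of_coeff_zero_mem {S : Type*} [CommRing S] {I : Ideal (Polynomial S)}
    {J : Ideal S} (hIJ : ∀ P ∈ I, P.coeff 0 ∈ J) {k : ℕ} {P : Polynomial S} (hP : P ∈ I ^ k)
    (j : ℕ) : P.coeff j ∈ J ^ (k - j) := by
  induction k generalizing P j with
  | zero => simp
  | succ k ih =>
    rw [pow_succ] at hP
    induction hP using Submodule.mul_induction_on' with
    | mem_mul_mem A hA B hB =>
      rw [Polynomial.coeff_mul]
      refine Ideal.sum_mem _ fun ab hab => ?_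
      have hsum : ab.1 + ab.2 = j := Finset.HasAntidiagonal.mem_antidiagonal.mp hab
      have hBcoeff : B.coeff ab.2 ∈ J ^ (1 - ab.2) := by
        rcases ab.2 with _ | b
        · simpa using hIJ B hB
        · simp
      have hprod := Ideal.mul_mem_mul (ih hA ab.1) hBcoeff
      rw [← pow_add] at hprod
      exact Ideal.pow_le_pow_right (by omega) hprod
    | add A _ B _ hA hB =>
      rw [Polynomial.coeff_add]
      exact add_mem hA hB

variable {K : Type*} [Field K] {σ : Type*}

/-- The expansion of polynomials in powers of the linear form `ℓ`, whose coefficients are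
polynomials in the linear forms vanishing at `q`: the variable of `Polynomial` stands for `ℓ`, and
`X i - (q i / ℓ(q)) * ℓ` vanishes at `q`. It is built through `optionEquivLeft`, `none` being the
index of the new variable, to keep track of total degrees. Only meaningful when `ℓ(q) ≠ 0`. -/
def coneExpansion (ℓ : MvPolynomial σ K) (q : σ → K) :
    MvPolynomial σ K →ₐ[K] Polynomial (MvPolynomial σ K) :=
  (optionEquivLeft K σ).toAlgHom.comp <| aeval fun i =>
    rename some (X i - C (q i / eval q ℓ) * ℓ) + C (q i / eval q ℓ) * X none

variable {ℓ : MvPolynomial σ K} {q : σ → K} {f : MvPolynomial σ K}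

lemma coneExpansion_X (i : σ) :
    coneExpansion ℓ q (X i) = Polynomial.C (X i - C (q i / eval q ℓ) * ℓ) +
      Polynomial.C (C (q i / eval q ℓ)) * Polynomial.X := by
  have hrename (g : MvPolynomial σ K) : optionEquivLeft K σ (rename some g) = Polynomial.C g := by
    induction g using MvPolynomial.induction_on with
    | C a => simp
    | add g h hg hh => simp [hg, hh]
    | mul_X g i hg => simp [hg]
  simp [coneExpansion, hrename]

lemma coneExpansion_of_isHomogeneous_one (hf : f.IsHomogeneous 1) :
    coneExpansion ℓ q f = Polynomial.C (f - C (eval q f / eval q ℓ) * ℓ) +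
      Polynomial.C (C (eval q f / eval q ℓ)) * Polynomial.X := by
  have hspan : f ∈ Submodule.span K (Set.range X) :=
    homogeneousSubmodule_one_eq_span_X (σ := σ) (R := K) ▸ hf
  clear hf
  induction hspan using Submodule.span_induction with
  | mem f hf =>
    obtain ⟨i, rfl⟩ := hf
    simp [coneExpansion_X]
  | zero => simp
  | add f g _ _ hf hg =>
    simp only [map_add, map_sub, map_mul, hf, hg, add_div]
    ring
  | smul a f _ hf =>
    simp only [smul_eq_C_mul, map_sub, map_mul, hf, eval_C, mul_div_assoc,
      algHom_C, Polynomial.algebraMap_apply, algebraMap_eq]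
    ring

lemma eval_coneExpansion (f : MvPolynomial σ K) : (coneExpansion ℓ q f).eval ℓ = f := by
  have hid : (Polynomial.evalRingHom ℓ).comp (coneExpansion ℓ q : _ →+* _) = RingHom.id _ := by
    refine MvPolynomial.ringHom_ext (fun a => ?_) fun i => ?_
    · simp [Polynomial.algebraMap_apply]
    · simp [coneExpansion_X]
  exact congrArg (fun φ => φ f) hid

lemma exists_coeff_coneExpansion_ne_zero (hf : f ≠ 0) :
    ∃ j, (coneExpansion ℓ q f).coeff j ≠ 0 := by
  by_contra! hzero
  have hexp : coneExpansion ℓ q f = 0 := Polynomial.ext hzero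
  apply hf
  rw [← eval_coneExpansion (ℓ := ℓ) (q := q) f, hexp, Polynomial.eval_zero]

lemma totalDegree_coeff_coneExpansion_add_le (hℓ : ℓ.IsHomogeneous 1) {d j : ℕ}
    (hf : f.IsHomogeneous d) (hj : (coneExpansion ℓ q f).coeff j ≠ 0) :
    ((coneExpansion ℓ q f).coeff j).totalDegree + j ≤ d := by
  set g : MvPolynomial (Option σ) K := aeval (fun i =>
    rename some (X i - C (q i / eval q ℓ) * ℓ) + C (q i / eval q ℓ) * X none) f
  have hg : g.IsHomogeneous d := by
    rw [← one_mul d]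
    refine hf.aeval _ fun i => .add ?_ (isHomogeneous_C_mul_X _ _)
    exact ((isHomogeneous_X K i).sub (hℓ.C_mul _)).rename_isHomogeneous
  have hj' : (optionEquivLeft K σ g).coeff j ≠ 0 := hj
  have hjg : j ≤ g.totalDegree :=
    (Polynomial.le_natDegree_of_ne_zero hj').trans <|
      (natDegree_optionEquivLeft K g).trans_le (degreeOf_le_totalDegree g none)
  exact (totalDegree_coeff_optionEquivLeft_add_le K σ g j hjg).trans hg.totalDegree_le

end ConeExpansion

section PointIdeals

variable {K : Type*} [Field K] {ℓ f : MvPolynomial (Fin 3) K} {p q : Fin 3 → K} {k : ℕ}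

lemma mem_pointIdeal (hf : f.IsHomogeneous 1) (hfp : eval p f = 0) : f ∈ pointIdeal p :=
  Ideal.subset_span ⟨hf, hfp⟩

lemma pointIdeal_le_idealOfVars (p : Fin 3 → K) : pointIdeal p ≤ idealOfVars (Fin 3) K := by
  refine Ideal.span_le.mpr ?_
  rintro f ⟨hf, -⟩
  obtain ⟨c, rfl⟩ := exists_eq_linearForm hf
  exact Ideal.sum_mem _ fun i _ => Ideal.mul_mem_left _ _ (Ideal.subset_span ⟨i, rfl⟩)

lemma le_totalDegree_of_mem_pow_pointIdeal (hf : f ∈ pointIdeal p ^ k) (hf0 : f ≠ 0) :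
    k ≤ f.totalDegree := by
  obtain ⟨s, hs⟩ := support_nonempty.mpr hf0
  have hks := (mem_pow_idealOfVars_iff k f).mp
    (Ideal.pow_right_mono (pointIdeal_le_idealOfVars p) k hf) s hs
  exact hks.trans (le_totalDegree hs)

lemma coeff_coneExpansion_mem_pow_pointIdeal (hf : f ∈ pointIdeal q ^ k) (j : ℕ) :
    (coneExpansion ℓ q f).coeff j ∈ pointIdeal q ^ k := by
  have hle : (pointIdeal q).map (coneExpansion ℓ q) ≤ (pointIdeal q).map Polynomial.C := by
    refine Ideal.map_le_iff_le_comap.mpr (Ideal.span_le.mpr ?_)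
    rintro g ⟨hg, hgq⟩
    have hg_const : coneExpansion ℓ q g = Polynomial.C g := by
      simp [coneExpansion_of_isHomogeneous_one hg, hgq]
    simpa only [SetLike.mem_coe, Ideal.mem_comap, hg_const] using
      Ideal.mem_map_of_mem _ (mem_pointIdeal hg hgq)
  refine Ideal.mem_map_C_iff.mp ?_ j
  rw [Ideal.map_pow]
  refine Ideal.pow_right_mono hle k ?_
  rw [← Ideal.map_pow]
  exact Ideal.mem_map_of_mem _ hf

lemma coeff_zero_coneExpansion_mem_span_joiningLine (hℓ : ℓ.IsHomogeneous 1)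
    (hq : eval q ℓ ≠ 0) (hp : p ≠ 0) (hpℓ : eval p ℓ = 0) (hf : f ∈ pointIdeal p) :
    (coneExpansion ℓ q f).coeff 0 ∈ Ideal.span {joiningLine q p} := by
  suffices hle : pointIdeal p ≤ (Ideal.span {joiningLine q p}).comap
      (Polynomial.constantCoeff.comp (coneExpansion ℓ q : _ →+* _)) from hle hf
  refine Ideal.span_le.mpr ?_
  rintro g ⟨hg, hgp⟩
  have hcoeff : (coneExpansion ℓ q g).coeff 0 = g - C (eval q g / eval q ℓ) * ℓ := by
    simp [coneExpansion_of_isHomogeneous_one hg]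
  have hdvd : joiningLine q p ∣ g - C (eval q g / eval q ℓ) * ℓ :=
    joiningLine_dvd (cross_ne_zero_of_off_line hℓ hq hp hpℓ) (hg.sub (hℓ.C_mul _))
      (by simp [hq]) (by simp [hgp, hpℓ])
  simpa [Ideal.mem_span_singleton, hcoeff] using hdvd

lemma joiningLine_pow_dvd_coeff_coneExpansion (hℓ : ℓ.IsHomogeneous 1) (hq : eval q ℓ ≠ 0)
    (hp : p ≠ 0) (hpℓ : eval p ℓ = 0) (hf : f ∈ pointIdeal p ^ k) (j : ℕ) :
    joiningLine q p ^ (k - j) ∣ (coneExpansion ℓ q f).coeff j := by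
  have hconst : ∀ P ∈ (pointIdeal p).map (coneExpansion ℓ q),
      P.coeff 0 ∈ Ideal.span {joiningLine q p} := by
    suffices hle : (pointIdeal p).map (coneExpansion ℓ q) ≤
        (Ideal.span {joiningLine q p}).comap Polynomial.constantCoeff from fun P hP => hle hP
    exact Ideal.map_le_iff_le_comap.mpr fun g hg =>
      coeff_zero_coneExpansion_mem_span_joiningLine hℓ hq hp hpℓ hg
  have hmem : coneExpansion ℓ q f ∈ (pointIdeal p).map (coneExpansion ℓ q) ^ k := by
    rw [← Ideal.map_pow]
    exact Ideal.mem_map_of_mem _ hf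
  rw [← Ideal.mem_span_singleton, ← Ideal.span_singleton_pow]
  exact coeff_mem_pow_sub_of_coeff_zero_mem hconst hmem j

end PointIdeals

section InitialDegree

variable {K : Type*} [Field K] {σ : Type*} {J : Ideal (MvPolynomial σ K)}
  {f : MvPolynomial σ K} {d : ℕ}

lemma alpha_le (hf : f ∈ J) (hf0 : f ≠ 0) (hfd : f.IsHomogeneous d) : alpha J ≤ d :=
  Nat.sInf_le ⟨f, hf, hf0, hfd⟩

lemma exists_mem_isHomogeneous_alpha (hf : f ∈ J) (hf0 : f ≠ 0) (hfd : f.IsHomogeneous d) :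
    ∃ g ∈ J, g ≠ 0 ∧ g.IsHomogeneous (alpha J) :=
  Nat.sInf_mem (s := {d | ∃ g ∈ J, g ≠ 0 ∧ g.IsHomogeneous d}) ⟨d, f, hf, hf0, hfd⟩

end InitialDegree

section FatPoints

variable {K : Type*} [Field K] {ι : Type*} {q : Fin 3 → K} {p : ι → Fin 3 → K}
  {ℓ f : MvPolynomial (Fin 3) K} {m k : ℕ}

/-- The `k`-th symbolic power of the ideal of the fat points scheme `m q + ∑ i, p i`. -/
def fatPointsIdeal (q : Fin 3 → K) (m : ℕ) (p : ι → Fin 3 → K) (k : ℕ) :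
    Ideal (MvPolynomial (Fin 3) K) :=
  pointIdeal q ^ (m * k) ⊓ ⨅ i, pointIdeal (p i) ^ k

lemma mem_fatPointsIdeal :
    f ∈ fatPointsIdeal q m p k ↔ f ∈ pointIdeal q ^ (m * k) ∧ ∀ i, f ∈ pointIdeal (p i) ^ k := by
  rw [fatPointsIdeal, Submodule.mem_inf, Submodule.mem_iInf]

lemma fatPointsIdeal_antitone (q : Fin 3 → K) (m : ℕ) (p : ι → Fin 3 → K) :
    Antitone (fatPointsIdeal q m p) := fun _ _ hkl =>
  inf_le_inf (Ideal.pow_le_pow_right (Nat.mul_le_mul_left m hkl))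
    (iInf_mono fun _ => Ideal.pow_le_pow_right hkl)

lemma pow_mem_fatPointsIdeal (hf : f ∈ fatPointsIdeal q m p k) (r : ℕ) :
    f ^ r ∈ fatPointsIdeal q m p (k * r) := by
  rw [mem_fatPointsIdeal] at hf ⊢
  refine ⟨?_, fun i => ?_⟩
  · rw [← mul_assoc, pow_mul]
    exact Ideal.pow_mem_pow hf.1 r
  · rw [pow_mul]
    exact Ideal.pow_mem_pow (hf.2 i) r

variable [Fintype ι]

lemma prod_joiningLine_pow_dvd_coeff_coneExpansion (hℓ : ℓ.IsHomogeneous 1) (hq : eval q ℓ ≠ 0)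
    (hp : ∀ i, p i ≠ 0) (hpℓ : ∀ i, eval (p i) ℓ = 0)
    (hpp : Pairwise fun i j => ¬ projEq (p i) (p j)) (hf : ∀ i, f ∈ pointIdeal (p i) ^ k) (j : ℕ) :
    ∏ i, joiningLine q (p i) ^ (k - j) ∣ (coneExpansion ℓ q f).coeff j := by
  refine Finset.prod_dvd_of_isRelPrime (fun i _ i' _ hii' => ?_) fun i _ =>
    joiningLine_pow_dvd_coeff_coneExpansion hℓ hq (hp i) (hpℓ i) (hf i) j
  exact (pairwise_isRelPrime_joiningLine hℓ hq hp hpℓ hpp hii').pow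

lemma exists_degree_bounds_of_mem_fatPointsIdeal (hℓ : ℓ.IsHomogeneous 1) (hq : eval q ℓ ≠ 0)
    (hp : ∀ i, p i ≠ 0) (hpℓ : ∀ i, eval (p i) ℓ = 0)
    (hpp : Pairwise fun i j => ¬ projEq (p i) (p j)) (hf : f ∈ fatPointsIdeal q m p k)
    (hf0 : f ≠ 0) {d : ℕ} (hfd : f.IsHomogeneous d) :
    ∃ j, m * k + j ≤ d ∧ Fintype.card ι * (k - j) + j ≤ d := by
  rw [mem_fatPointsIdeal] at hf
  obtain ⟨j, hj⟩ := exists_coeff_coneExpansion_ne_zero (ℓ := ℓ) (q := q) hf0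
  have hdeg := totalDegree_coeff_coneExpansion_add_le hℓ hfd hj
  have hmult_q := le_totalDegree_of_mem_pow_pointIdeal
    (coeff_coneExpansion_mem_pow_pointIdeal hf.1 j) hj
  have hdvd := prod_joiningLine_pow_dvd_coeff_coneExpansion hℓ hq hp hpℓ hpp hf.2 j
  have hlines : (∏ i, joiningLine q (p i) ^ (k - j)).totalDegree = Fintype.card ι * (k - j) := by
    have hhom : (∏ i, joiningLine q (p i) ^ (k - j)).IsHomogeneous (∑ _i : ι, 1 * (k - j)) :=
      IsHomogeneous.prod _ _ _ fun i _ => (isHomogeneous_joiningLine q (p i)).pow _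
    rw [hhom.totalDegree (ne_zero_of_dvd_ne_zero hj hdvd)]
    simp
  have hmult_p := totalDegree_le_of_dvd_of_isDomain hdvd hj
  exact ⟨j, by omega, by omega⟩

lemma card_mul_le_of_mem_fatPointsIdeal [Nonempty ι] (hℓ : ℓ.IsHomogeneous 1)
    (hq : eval q ℓ ≠ 0) (hp : ∀ i, p i ≠ 0) (hpℓ : ∀ i, eval (p i) ℓ = 0)
    (hpp : Pairwise fun i j => ¬ projEq (p i) (p j)) (hf : f ∈ fatPointsIdeal q m p k)
    (hf0 : f ≠ 0) {d : ℕ} (hfd : f.IsHomogeneous d) :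
    Fintype.card ι * ((m + 1) * k) ≤ Fintype.card ι * d + m * k := by
  obtain ⟨j, hmult_q, hmult_p⟩ :=
    exists_degree_bounds_of_mem_fatPointsIdeal hℓ hq hp hpℓ hpp hf hf0 hfd
  obtain ⟨n, hn⟩ := Nat.exists_eq_succ_of_ne_zero (Fintype.card_ne_zero (α := ι))
  rw [hn] at hmult_p ⊢
  rcases le_total k j with hkj | hjk
  · nlinarith
  · obtain ⟨e, rfl⟩ := Nat.exists_eq_add_of_le hjk
    rw [Nat.add_sub_cancel_left] at hmult_p
    nlinarith

/-- A form of least degree relative to its multiplicities along `m q + ∑ i, p i`. The truncated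
subtraction restricts its use to `m ≤ card ι`. -/
def extremalForm (ℓ : MvPolynomial (Fin 3) K) (q : Fin 3 → K) (m : ℕ) (p : ι → Fin 3 → K) :
    MvPolynomial (Fin 3) K :=
  ℓ ^ (Fintype.card ι - m) * ∏ i, joiningLine q (p i) ^ m

lemma isHomogeneous_extremalForm (hℓ : ℓ.IsHomogeneous 1) :
    (extremalForm ℓ q m p).IsHomogeneous (Fintype.card ι - m + Fintype.card ι * m) := by
  have hlines : (∏ i, joiningLine q (p i) ^ m).IsHomogeneous (∑ _i : ι, 1 * m) :=
    IsHomogeneous.prod _ _ _ fun i _ => (isHomogeneous_joiningLine q (p i)).pow _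
  simpa [extremalForm] using (hℓ.pow (Fintype.card ι - m)).mul hlines

lemma extremalForm_ne_zero (hℓ : ℓ.IsHomogeneous 1) (hq : eval q ℓ ≠ 0) (hp : ∀ i, p i ≠ 0)
    (hpℓ : ∀ i, eval (p i) ℓ = 0) : extremalForm ℓ q m p ≠ 0 := by
  have hℓ0 : ℓ ≠ 0 := by rintro rfl; simp at hq
  refine mul_ne_zero (pow_ne_zero _ hℓ0) (Finset.prod_ne_zero_iff.mpr fun i _ => ?_)
  exact pow_ne_zero _ (joiningLine_ne_zero_of_off_line hℓ hq (hp i) (hpℓ i))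

lemma extremalForm_mem_fatPointsIdeal (hℓ : ℓ.IsHomogeneous 1) (hpℓ : ∀ i, eval (p i) ℓ = 0)
    (hm : m ≤ Fintype.card ι) :
    extremalForm ℓ q m p ∈ fatPointsIdeal q m p (Fintype.card ι) := by
  refine mem_fatPointsIdeal.mpr ⟨Ideal.mul_mem_left _ _ ?_, fun i => ?_⟩
  · have hlines := Ideal.prod_mem_prod (s := Finset.univ) fun i _ => Ideal.pow_mem_pow
      (mem_pointIdeal (isHomogeneous_joiningLine q (p i)) (eval_left_joiningLine q (p i))) m
    simpa only [Finset.prod_const, Finset.card_univ, ← pow_mul] using hlines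
  · have hdvd : ℓ ^ (Fintype.card ι - m) * joiningLine q (p i) ^ m ∣ extremalForm ℓ q m p :=
      mul_dvd_mul_left _ (Finset.dvd_prod_of_mem _ (Finset.mem_univ i))
    refine Ideal.mem_of_dvd _ hdvd ?_
    rw [← Nat.sub_add_cancel hm, pow_add, Nat.add_sub_cancel]
    exact Ideal.mul_mem_mul (Ideal.pow_mem_pow (mem_pointIdeal hℓ (hpℓ i)) _) <|
      Ideal.pow_mem_pow (mem_pointIdeal (isHomogeneous_joiningLine _ _)
        (eval_right_joiningLine _ _)) _

lemma alpha_fatPointsIdeal_card_le (hℓ : ℓ.IsHomogeneous 1) (hq : eval q ℓ ≠ 0)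
    (hp : ∀ i, p i ≠ 0) (hpℓ : ∀ i, eval (p i) ℓ = 0) (hm : m ≤ Fintype.card ι) :
    alpha (fatPointsIdeal q m p (Fintype.card ι)) ≤
      Fintype.card ι - m + Fintype.card ι * m :=
  alpha_le (extremalForm_mem_fatPointsIdeal hℓ hpℓ hm) (extremalForm_ne_zero hℓ hq hp hpℓ)
    (isHomogeneous_extremalForm hℓ)

variable [Nonempty ι]

lemma card_mul_le_card_mul_alpha_fatPointsIdeal (hℓ : ℓ.IsHomogeneous 1) (hq : eval q ℓ ≠ 0)
    (hp : ∀ i, p i ≠ 0) (hpℓ : ∀ i, eval (p i) ℓ = 0)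
    (hpp : Pairwise fun i j => ¬ projEq (p i) (p j)) (hm : m ≤ Fintype.card ι) (k : ℕ) :
    Fintype.card ι * ((m + 1) * k) ≤
      Fintype.card ι * alpha (fatPointsIdeal q m p k) + m * k := by
  have hpow_mem : extremalForm ℓ q m p ^ k ∈ fatPointsIdeal q m p k :=
    fatPointsIdeal_antitone q m p (Nat.le_mul_of_pos_left k Fintype.card_pos)
      (pow_mem_fatPointsIdeal (extremalForm_mem_fatPointsIdeal hℓ hpℓ hm) k)
  obtain ⟨f, hf, hf0, hfd⟩ := exists_mem_isHomogeneous_alpha hpow_mem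
    (pow_ne_zero k (extremalForm_ne_zero hℓ hq hp hpℓ)) ((isHomogeneous_extremalForm hℓ).pow k)
  exact card_mul_le_of_mem_fatPointsIdeal hℓ hq hp hpℓ hpp hf hf0 hfd

theorem waldschmidt_double_point_off_line_four_points_general (hℓ : ℓ.IsHomogeneous 1)
    (hq : eval q ℓ ≠ 0) (hp : ∀ i, p i ≠ 0) (hpℓ : ∀ i, eval (p i) ℓ = 0)
    (hpp : Pairwise fun i j => ¬ projEq (p i) (p j)) (hm : m ≤ Fintype.card ι) :
    (⨅ k : ℕ+, (alpha (fatPointsIdeal q m p k) : ℝ) / ((k : ℕ) : ℝ)) =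
      m + 1 - m / Fintype.card ι := by
  have hcard : (0 : ℝ) < Fintype.card ι := by exact_mod_cast Fintype.card_pos
  apply le_antisymm
  · refine (ciInf_le ⟨0, ?_⟩ ⟨Fintype.card ι, Fintype.card_pos⟩).trans ?_
    · rintro _ ⟨k, rfl⟩
      positivity
    · have hupper : (alpha (fatPointsIdeal q m p (Fintype.card ι)) : ℝ) ≤
          Fintype.card ι - m + Fintype.card ι * m := by
        rw [← Nat.cast_sub hm]
        exact_mod_cast alpha_fatPointsIdeal_card_le hℓ hq hp hpℓ hm
      rw [PNat.mk_coe, div_le_iff₀ hcard, sub_mul, div_mul_cancel₀ _ hcard.ne']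
      linarith
  · refine le_ciInf fun k => ?_
    have hk : (0 : ℝ) < (k : ℕ) := by exact_mod_cast k.pos
    have hlower : (Fintype.card ι * ((m + 1) * (k : ℕ)) : ℝ) ≤
        Fintype.card ι * alpha (fatPointsIdeal q m p k) + m * (k : ℕ) := by
      exact_mod_cast card_mul_le_card_mul_alpha_fatPointsIdeal hℓ hq hp hpℓ hpp hm k
    rw [sub_le_iff_le_add, div_add_div _ _ hk.ne' hcard.ne', le_div_iff₀ (mul_pos hk hcard)]
    linarith

end FatPoints

/-- Let `L = {ℓ = 0}` be a line of `ℙ²`, let `p₂, p₃, p₄, p₅` be four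
distinct points of `L`, and let `p₁` be a point not on `L`.  Let
`Z = 2p₁ + p₂ + p₃ + p₄ + p₅`.  Then the Waldschmidt constant of `I(Z)` equals `5/2`. -/
theorem waldschmidt_double_point_off_line_four_points
    {kk : Type*} [Field kk] [IsAlgClosed kk]
    (ℓ : MvPolynomial (Fin 3) kk) (hl0 : ℓ ≠ 0) (hl1 : ℓ.IsHomogeneous 1)
    (p₁ p₂ p₃ p₄ p₅ : Fin 3 → kk)
    (hp10 : p₁ ≠ 0) (hp20 : p₂ ≠ 0) (hp30 : p₃ ≠ 0) (hp40 : p₄ ≠ 0) (hp50 : p₅ ≠ 0)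
    (hoff : MvPolynomial.eval p₁ ℓ ≠ 0)
    (hon2 : MvPolynomial.eval p₂ ℓ = 0) (hon3 : MvPolynomial.eval p₃ ℓ = 0)
    (hon4 : MvPolynomial.eval p₄ ℓ = 0) (hon5 : MvPolynomial.eval p₅ ℓ = 0)
    (hp23 : ¬ projEq p₂ p₃) (hp24 : ¬ projEq p₂ p₄) (hp25 : ¬ projEq p₂ p₅)
    (hp34 : ¬ projEq p₃ p₄) (hp35 : ¬ projEq p₃ p₅) (hp45 : ¬ projEq p₄ p₅) :
    (⨅ k : ℕ+, (alpha (pointIdeal p₁ ^ (2 * (k : ℕ)) ⊓ pointIdeal p₂ ^ (k : ℕ) ⊓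
        pointIdeal p₃ ^ (k : ℕ) ⊓ pointIdeal p₄ ^ (k : ℕ) ⊓ pointIdeal p₅ ^ (k : ℕ)) : ℝ)
          / ((k : ℕ) : ℝ))
      = 5 / 2 := by
  have hpp : Pairwise fun i j => ¬ projEq (![p₂, p₃, p₄, p₅] i) (![p₂, p₃, p₄, p₅] j) := by
    simp [Fin.forall_fin_succ, mt projEq_symm, Pairwise, *]
  have hfat (k : ℕ) : pointIdeal p₁ ^ (2 * k) ⊓ pointIdeal p₂ ^ k ⊓ pointIdeal p₃ ^ k ⊓
      pointIdeal p₄ ^ k ⊓ pointIdeal p₅ ^ k = fatPointsIdeal p₁ 2 ![p₂, p₃, p₄, p₅] k := by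
    ext f
    simp [mem_fatPointsIdeal, Fin.forall_fin_succ, and_assoc]
  simp only [hfat]
  rw [waldschmidt_double_point_off_line_four_points_general hl1 hoff
    (by simp [Fin.forall_fin_succ, *]) (by simp [Fin.forall_fin_succ, *]) hpp (by simp)]
  norm_num
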